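/- (Strengthened Cauchy–Bunyakovsky–Schwarz inequality) Let H be a finite-dimensional real inner product space with inner product ⟨·,·⟩ and induced norm ‖·‖, and let U and V be linear subspaces of H with U ∩ V = {0}. Then there exists a constant γ with 0 ≤ γ < 1, depending only on U and V, such that for all u ∈ U and v ∈ V, |⟨u, v⟩| ≤ γ ‖u‖ ‖v‖. -/

import Mathlib

open scoped RealInnerProductSpace

/-!
Since `U` is finite-dimensional and meets the kernel `V` of `E → E ⧸ V` trivially, the quotient map
is bounded below on `U`: every `u ∈ U` lies at distance at least `c * ‖u‖` from `V`, for some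
`c > 0`. In particular `u` is at least this far from the line spanned by any `v ∈ V`, so by
Pythagoras its projection onto that line has norm at most `√(1 - c ^ 2) * ‖u‖`. The sine of the
angle between `U` and `V` is at least `c`, and its cosine at most `√(1 - c ^ 2) < 1`.
-/

theorem exists_pos_mul_norm_le_norm_sub_of_disjoint {𝕜 E : Type*} [NontriviallyNormedField 𝕜]
    [CompleteSpace 𝕜] [NormedAddCommGroup E] [NormedSpace 𝕜 E] {U V : Submodule 𝕜 E}
    [FiniteDimensional 𝕜 U] (hV : IsClosed (V : Set E)) (hUV : Disjoint U V) :
    ∃ c : ℝ, 0 < c ∧ ∀ u ∈ U, ∀ v ∈ V, c * ‖u‖ ≤ ‖u - v‖ := by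
  have hker : (V.mkQ ∘ₗ U.subtype).ker = ⊥ := by
    rwa [LinearMap.ker_comp, Submodule.ker_mkQ, ← Submodule.disjoint_iff_comap_eq_bot]
  obtain ⟨K, hK, hanti⟩ := LinearMap.exists_antilipschitzWith _ hker
  refine ⟨(K : ℝ)⁻¹, by positivity, fun u hu v hv => ?_⟩
  have hbound : ‖u‖ ≤ K * ‖V.mkQ u‖ := by
    simpa using hanti.le_mul_dist (⟨u, hu⟩ : U) 0
  have hmk : V.mkQ (u - v) = V.mkQ u := by
    rw [map_sub, V.mkQ_apply v, (Submodule.Quotient.mk_eq_zero V).2 hv, sub_zero]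
  rw [inv_mul_le_iff₀ (by positivity)]
  calc ‖u‖ ≤ K * ‖V.mkQ (u - v)‖ := by rwa [hmk]
    _ ≤ K * ‖u - v‖ := by gcongr; exact Submodule.Quotient.norm_mk_le V (u - v)

section InnerProductSpace

variable {𝕜 E : Type*} [RCLike 𝕜] [NormedAddCommGroup E] [InnerProductSpace 𝕜 E]

theorem norm_starProjection_le_sqrt_mul_norm {W : Submodule 𝕜 E} [W.HasOrthogonalProjection]
    {u : E} {c : ℝ} (hc : 0 ≤ c) (hu : c * ‖u‖ ≤ ‖u - W.starProjection u‖) :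
    ‖W.starProjection u‖ ≤ √(1 - c ^ 2) * ‖u‖ := by
  have hpyth : ‖u‖ ^ 2 = ‖W.starProjection u‖ ^ 2 + ‖u - W.starProjection u‖ ^ 2 := by
    rw [← Submodule.starProjection_orthogonal_val]
    exact W.norm_sq_eq_add_norm_sq_starProjection u
  have hsq : (c * ‖u‖) ^ 2 ≤ ‖u - W.starProjection u‖ ^ 2 := by gcongr
  calc ‖W.starProjection u‖ ≤ √((1 - c ^ 2) * ‖u‖ ^ 2) := Real.le_sqrt_of_sq_le (by linarith)
    _ = √(1 - c ^ 2) * ‖u‖ := by rw [Real.sqrt_mul' _ (sq_nonneg _), Real.sqrt_sq (norm_nonneg u)]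

theorem norm_inner_le_sqrt_mul_norm_mul_norm {u v : E} {c : ℝ} (hc : 0 ≤ c)
    (hu : ∀ a : 𝕜, c * ‖u‖ ≤ ‖u - a • v‖) :
    ‖inner 𝕜 u v‖ ≤ √(1 - c ^ 2) * ‖u‖ * ‖v‖ := by
  let P := (𝕜 ∙ v).starProjection
  have hPv : P v = v :=
    Submodule.starProjection_eq_self_iff.2 (Submodule.mem_span_singleton_self v)
  obtain ⟨a, ha⟩ := Submodule.mem_span_singleton.1 ((𝕜 ∙ v).starProjection_apply_mem u)
  have hPu : ‖P u‖ ≤ √(1 - c ^ 2) * ‖u‖ :=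
    norm_starProjection_le_sqrt_mul_norm hc (ha ▸ hu a)
  calc ‖inner 𝕜 u v‖ = ‖inner 𝕜 (P u) v‖ := by
        rw [Submodule.inner_starProjection_left_eq_right, hPv]
    _ ≤ ‖P u‖ * ‖v‖ := norm_inner_le_norm _ _
    _ ≤ √(1 - c ^ 2) * ‖u‖ * ‖v‖ := by gcongr

theorem strengthened_cbs_general {U V : Submodule 𝕜 E} [FiniteDimensional 𝕜 U]
    (hV : IsClosed (V : Set E)) (hUV : Disjoint U V) :
    ∃ γ : ℝ, 0 ≤ γ ∧ γ < 1 ∧ ∀ u ∈ U, ∀ v ∈ V, ‖inner 𝕜 u v‖ ≤ γ * ‖u‖ * ‖v‖ := by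
  obtain ⟨c, hc, hdist⟩ := exists_pos_mul_norm_le_norm_sub_of_disjoint hV hUV
  have hlt : √(1 - c ^ 2) < 1 := by
    rw [Real.sqrt_lt' one_pos]
    linarith [pow_pos hc 2]
  exact ⟨√(1 - c ^ 2), Real.sqrt_nonneg _, hlt, fun u hu v hv =>
    norm_inner_le_sqrt_mul_norm_mul_norm hc.le fun a => hdist u hu _ (V.smul_mem a hv)⟩

end InnerProductSpace

/-- Strengthened Cauchy–Bunyakovsky–Schwarz inequality: for subspaces `U`, `V`
of a finite-dimensional real inner product space with trivial intersection,
there is a constant `0 ≤ γ < 1`, depending only on `U` and `V`, with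
`|⟪u, v⟫| ≤ γ * ‖u‖ * ‖v‖` for all `u ∈ U`, `v ∈ V`. -/
theorem strengthened_cbs (H : Type*) [NormedAddCommGroup H]
    [InnerProductSpace ℝ H] [FiniteDimensional ℝ H]
    (U V : Submodule ℝ H) (hUV : U ⊓ V = ⊥) :
    ∃ γ : ℝ, 0 ≤ γ ∧ γ < 1 ∧ ∀ u ∈ U, ∀ v ∈ V, |⟪u, v⟫| ≤ γ * ‖u‖ * ‖v‖ :=
  strengthened_cbs_general V.closed_of_finiteDimensional (disjoint_iff.2 hUV)
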